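/- Let g = g(X_1,X_2) ∈ 𝕃(r_1,r_2) with coefficient matrix M = M(g) satisfying Δ_1(M) = Δ_2(M) = Δ(M) = |Z̄(g)|, where Δ is the BCH apparent distance. Then: (1) for each k ∈ M_1 (i.e., each k such that the row H_M(1,k) is involved in the computation of Δ(M)), Δ(M(g_{1,k})) = |Z̄(g_{1,k})| = |Z̄_2|, and for every v ∈ Z̄(g_{1,k}), Δ(M(g(X_1,v))) = |Z̄(g(X_1,v))|; (2) symmetrically, for each k ∈ M_2, Δ(M(g_{2,k})) = |Z̄(g_{2,k})| = |Z̄_1|, and for every u ∈ Z̄(g_{2,k}), Δ(M(g(u,X_2))) = |Z̄(g(u,X_2))|. -/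

import Mathlib

/-!
The key fact is the BCH bound `bchV w ≤ |Z̄(w)|` for `w : ZMod n → L` (`bchV_le_ncard`): if `w` has
`a - 1` cyclically consecutive zero coefficients, then some cyclic rotation of `w` is a nonzero
polynomial of degree at most `n - a`. Rotation multiplies the value at an `n`-th root of unity by
a unit, so `w` vanishes at no more than `n - a` of the `n` roots of unity.

Slice `Z̄(g)` by the second coordinate: `|Z̄(g)| = ∑ v ∈ Z̄₂, |Z̄(g(X₁,v))|`. Let row `k` attain
`ε₁`. For `v ∈ Z̄(g_{1,k})` the section `g(X₁,v)` is nonzero and supported in `supp₁`, whence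
`ω₁ ≤ Δ(g(X₁,v)) ≤ |Z̄(g(X₁,v))|`. Therefore
`|Z̄(g)| ≥ ∑ v ∈ Z̄(g_{1,k}), |Z̄(g(X₁,v))| ≥ ω₁ |Z̄(g_{1,k})| ≥ ω₁ ε₁ = |Z̄(g)|`,
and every inequality is an equality; this is assertion (1) (`involved_rows`). Assertion (2) is
assertion (1) for the transposed matrix `g ∘ Prod.swap`.
-/

open scoped Classical
open Polynomial

noncomputable section

namespace DS

/-- Hamming weight of a vector. -/
def wt {ι R : Type} [Fintype ι] [Zero R] (v : ι → R) : ℕ :=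
  (Finset.univ.filter fun i => v i ≠ 0).card

/-- Minimum (Hamming) distance of a set of codewords. -/
def minDist {ι R : Type} [Fintype ι] [Zero R] (C : Set (ι → R)) : ℕ :=
  sInf (wt '' (C \ {0}))

/-! ### Univariate (cyclic) setting -/

/-- cyclic shift = multiplication by `X` in `F[X]/(X^n-1)` -/
def shiftOne {n : ℕ} {R : Type} (v : ZMod n → R) : ZMod n → R := fun i => v (i - 1)

/-- A cyclic code: an ideal of `F[X]/(X^n-1)`, viewed through coefficient vectors. -/
def IsCyclicCode {F : Type} [Field F] {n : ℕ} (C : Set (ZMod n → F)) : Prop :=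
  (0 : ZMod n → F) ∈ C ∧ (∀ u ∈ C, ∀ v ∈ C, u + v ∈ C) ∧
    (∀ (a : F), ∀ v ∈ C, a • v ∈ C) ∧ (∀ v ∈ C, shiftOne v ∈ C)

/-- Evaluation of a (coefficient vector of a) polynomial of `L(n)` at `β`. -/
def evalV {n : ℕ} [NeZero n] {R : Type} [CommRing R] (v : ZMod n → R) (β : R) : R :=
  ∑ i : ZMod n, v i * β ^ i.val

/-- Evaluation of an `F`-polynomial at a point of an extension `L`. -/
def evalVF {F L : Type} [Field F] [CommRing L] [Algebra F L] {n : ℕ} [NeZero n]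
    (v : ZMod n → F) (β : L) : L :=
  ∑ i : ZMod n, algebraMap F L (v i) * β ^ i.val

/-- Defining set of a cyclic code with respect to `α`. -/
def defSet1 {F L : Type} [Field F] [CommRing L] [Algebra F L] {n : ℕ} [NeZero n]
    (α : L) (C : Set (ZMod n → F)) : Set (ZMod n) :=
  {i | ∀ v ∈ C, evalVF v (α ^ i.val) = 0}

/-- Discrete Fourier transform of an `F`-codeword with respect to `α`. -/
def dft1 {F L : Type} [Field F] [CommRing L] [Algebra F L] {n : ℕ} [NeZero n]
    (α : L) (c : ZMod n → F) : ZMod n → L :=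
  fun j => evalVF c (α ^ j.val)

/-- Inverse discrete Fourier transform. -/
def invDFT1 {L : Type} [Field L] {n : ℕ} [NeZero n] (α : L) (g : ZMod n → L) :
    ZMod n → L :=
  fun j => (n : L)⁻¹ * evalV g (α⁻¹ ^ j.val)

/-- The set `Z̄(v)` of `n`-th roots of unity at which `v` does not vanish. -/
def nonzeros1 {L : Type} [CommRing L] {n : ℕ} [NeZero n] (v : ZMod n → L) : Set L :=
  {β | β ^ n = 1 ∧ evalV v β ≠ 0}

/-- Multiplication (cyclic convolution) in `R[X]/(X^n-1)`. -/
def conv1 {n : ℕ} [NeZero n] {R : Type} [CommRing R] (u v : ZMod n → R) : ZMod n → R :=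
  fun i => ∑ j : ZMod n, u j * v (i - j)

/-- Coefficient vector of the reduction of `X^h·v` modulo `X^n-1`. -/
def shiftBy {n : ℕ} {R : Type} (h : ℕ) (v : ZMod n → R) : ZMod n → R :=
  fun i => v (i - (h : ZMod n))

/-- The polynomial (of degree `< n`) with coefficient vector `v`. -/
def toPoly {L : Type} [CommRing L] {n : ℕ} [NeZero n] (v : ZMod n → L) : Polynomial L :=
  ∑ i : ZMod n, Polynomial.C (v i) * Polynomial.X ^ i.val

/-! ### ds-bounds -/

/-- A defining-set bound (ds-bound) for the minimum distance of cyclic codes over `F`. -/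
structure DSBound (F : Type) [Field F] [Fintype F] where
  rel : ∀ n : ℕ, Set (ZMod n) → ℕ → Prop
  bound : ∀ (n : ℕ) [NeZero n] (C : Set (ZMod n → F)), IsCyclicCode C → C ≠ {0} →
    ∀ α : AlgebraicClosure F, IsPrimitiveRoot α n →
      ∀ (N : Set (ZMod n)) (b : ℕ), N ⊆ defSet1 α C → rel n N b → 1 ≤ b ∧ b ≤ minDist C
  mono : ∀ (n : ℕ) (N M : Set (ZMod n)), N ⊆ M → ∀ b, rel n N b → rel n M b
  one' : ∀ (n : ℕ) (N : Set (ZMod n)), rel n N 1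
  bdd : ∀ (n : ℕ) (N : Set (ZMod n)), BddAbove {b | rel n N b}

/-- The optimal ds-bound `δ̄` associated to a ds-bound `δ`. -/
def optB {F : Type} [Field F] [Fintype F] (δ : DSBound F) (n : ℕ) (N : Set (ZMod n)) : ℕ :=
  sSup {b | δ.rel n N b}

/-- Apparent distance of a vector with respect to a set `B` of ds-bounds. -/
def DeltaV {F : Type} [Field F] [Fintype F] (B : Set (DSBound F)) {L : Type} [Zero L]
    {n : ℕ} (v : ZMod n → L) : ℕ :=
  if v = 0 then 0 else sSup ((fun δ => optB δ n {i | v i ≠ 0}ᶜ) '' B)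

/-- `(B,α)`-apparent distance of a cyclic code. -/
def DeltaCodeAt1 {F : Type} [Field F] [Fintype F] {L : Type} [Field L] [Algebra F L]
    {n : ℕ} [NeZero n] (B : Set (DSBound F)) (α : L) (C : Set (ZMod n → F)) : ℕ :=
  sInf {m | ∃ c ∈ C, c ≠ 0 ∧ m = DeltaV B (dft1 α c)}

/-! ### Hypermatrices (several variables) -/

/-- Hypercolumn `H_M(j,k)` of a hypermatrix. -/
def hyperCol {L : Type} {s : ℕ} {r : Fin (s + 1) → ℕ} (M : (∀ i, ZMod (r i)) → L)
    (j : Fin (s + 1)) (k : ZMod (r j)) : (∀ i : Fin s, ZMod (r (j.succAbove i))) → L :=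
  fun x => M (j.insertNth k x)

/-- The `B`-apparent distance of an `s`-dimensional hypermatrix. -/
def DeltaH {F : Type} [Field F] [Fintype F] {L : Type} [Zero L] (B : Set (DSBound F)) :
    (s : ℕ) → (r : Fin s → ℕ) → ((∀ i, ZMod (r i)) → L) → ℕ
  | 0, _, M => if M = 0 then 0 else 1
  | s + 1, r, M =>
    if M = 0 then 0
    else
      sSup (Set.range fun j : Fin (s + 1) =>
        sSup ((fun δ => optB δ (r j) {k : ZMod (r j) | hyperCol M j k ≠ 0}ᶜ) '' B) *
        sSup ((fun k : ZMod (r j) =>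
            DeltaH B s (fun i => r (j.succAbove i)) (hyperCol M j k)) ''
          {k : ZMod (r j) | hyperCol M j k ≠ 0}))

/-- `supp_j(M)`. -/
def suppj {L : Type} [Zero L] {s : ℕ} {r : Fin (s + 1) → ℕ}
    (M : (∀ i, ZMod (r i)) → L) (j : Fin (s + 1)) : Set (ZMod (r j)) :=
  {k | hyperCol M j k ≠ 0}

/-- `ω_j(M)`. -/
def omegaj {F : Type} [Field F] [Fintype F] {L : Type} [Zero L] {s : ℕ}
    {r : Fin (s + 1) → ℕ} (B : Set (DSBound F)) (M : (∀ i, ZMod (r i)) → L)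
    (j : Fin (s + 1)) : ℕ :=
  sSup ((fun δ => optB δ (r j) (suppj M j)ᶜ) '' B)

/-- `ε_j(M)`. -/
def epsj {F : Type} [Field F] [Fintype F] {L : Type} [Zero L] {s : ℕ}
    {r : Fin (s + 1) → ℕ} (B : Set (DSBound F)) (M : (∀ i, ZMod (r i)) → L)
    (j : Fin (s + 1)) : ℕ :=
  sSup ((fun k => DeltaH B s (fun i => r (j.succAbove i)) (hyperCol M j k)) '' suppj M j)

/-- `Δ_j(M) = ω_j(M)·ε_j(M)`. -/
def Deltaj {F : Type} [Field F] [Fintype F] {L : Type} [Zero L] {s : ℕ}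
    {r : Fin (s + 1) → ℕ} (B : Set (DSBound F)) (M : (∀ i, ZMod (r i)) → L)
    (j : Fin (s + 1)) : ℕ :=
  omegaj B M j * epsj B M j

/-! ### Multivariate polynomials, DFT, abelian codes -/

/-- Evaluation of a multivariate polynomial (given by its coefficient hypermatrix). -/
def mEval {L : Type} [CommRing L] {s : ℕ} {r : Fin s → ℕ} [∀ i, NeZero (r i)]
    (f : (∀ i, ZMod (r i)) → L) (β : Fin s → L) : L :=
  ∑ j : ∀ i, ZMod (r i), f j * ∏ i, β i ^ (j i).val

/-- Multivariate discrete Fourier transform of an `F`-codeword. -/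
def mDFT {F L : Type} [Field F] [CommRing L] [Algebra F L] {s : ℕ} {r : Fin s → ℕ}
    [∀ i, NeZero (r i)] (α : Fin s → L) (c : (∀ i, ZMod (r i)) → F) :
    (∀ i, ZMod (r i)) → L :=
  fun j => ∑ k : ∀ i, ZMod (r i), algebraMap F L (c k) * ∏ i, (α i ^ (j i).val) ^ (k i).val

/-- Multivariate inverse discrete Fourier transform. -/
def mInvDFT {L : Type} [Field L] {s : ℕ} {r : Fin s → ℕ} [∀ i, NeZero (r i)]
    (α : Fin s → L) (g : (∀ i, ZMod (r i)) → L) : (∀ i, ZMod (r i)) → L :=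
  fun j => (∏ i, (r i : L))⁻¹ *
    ∑ k : ∀ i, ZMod (r i), g k * ∏ i, ((α i)⁻¹ ^ (j i).val) ^ (k i).val

/-- `Z̄(f)`: the points of `R` (products of roots of unity) where `f` does not vanish. -/
def mNonzeros {L : Type} [CommRing L] {s : ℕ} {r : Fin s → ℕ} [∀ i, NeZero (r i)]
    (f : (∀ i, ZMod (r i)) → L) : Set (Fin s → L) :=
  {β | (∀ i, β i ^ r i = 1) ∧ mEval f β ≠ 0}

/-- Multiplication by `X_t` in `F(r_1,…,r_s)`. -/
def mShift {s : ℕ} {r : Fin s → ℕ} {R : Type} (t : Fin s) (v : (∀ i, ZMod (r i)) → R) :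
    (∀ i, ZMod (r i)) → R :=
  fun j => v (fun i => if i = t then j i - 1 else j i)

/-- An abelian code: an ideal of `F[X_1,…,X_s]/(X_i^{r_i}-1)`. -/
def IsAbelianCode {F : Type} [Field F] {s : ℕ} {r : Fin s → ℕ}
    (C : Set ((∀ i, ZMod (r i)) → F)) : Prop :=
  (0 : (∀ i, ZMod (r i)) → F) ∈ C ∧ (∀ u ∈ C, ∀ v ∈ C, u + v ∈ C) ∧
    (∀ (a : F), ∀ v ∈ C, a • v ∈ C) ∧ (∀ t : Fin s, ∀ v ∈ C, mShift t v ∈ C)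

/-- Multiplication (multivariate cyclic convolution) in `R(r_1,…,r_s)`. -/
def mConv {s : ℕ} {r : Fin s → ℕ} [∀ i, NeZero (r i)] {R : Type} [CommRing R]
    (u v : (∀ i, ZMod (r i)) → R) : (∀ i, ZMod (r i)) → R :=
  fun j => ∑ k : ∀ i, ZMod (r i), u k * v (fun i => j i - k i)

/-- `(B,ᾱ)`-apparent distance of an abelian code. -/
def DeltaCodeAt {F : Type} [Field F] [Fintype F] {L : Type} [Field L] [Algebra F L]
    {s : ℕ} {r : Fin s → ℕ} [∀ i, NeZero (r i)] (B : Set (DSBound F)) (α : Fin s → L)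
    (C : Set ((∀ i, ZMod (r i)) → F)) : ℕ :=
  sInf {m | ∃ c ∈ C, c ≠ 0 ∧ m = DeltaH B s r (mDFT α c)}

/-- `B`-apparent distance of an abelian code. -/
def DeltaCode {F : Type} [Field F] [Fintype F] (L : Type) [Field L] [Algebra F L]
    {s : ℕ} {r : Fin s → ℕ} [∀ i, NeZero (r i)] (B : Set (DSBound F))
    (C : Set ((∀ i, ZMod (r i)) → F)) : ℕ :=
  sSup {m | ∃ α : Fin s → L, (∀ i, IsPrimitiveRoot (α i) (r i)) ∧ m = DeltaCodeAt B α C}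

/-! ### q-orbits, afforded hypermatrices, B-mad -/

/-- The `q`-orbit of a tuple of indices. -/
def qOrbit (q : ℕ) {s : ℕ} {r : Fin s → ℕ} (a : ∀ i, ZMod (r i)) :
    Set (∀ i, ZMod (r i)) :=
  {x | ∃ t : ℕ, x = fun i => (q : ZMod (r i)) ^ t * a i}

/-- `D` is a union of `q`-orbits. -/
def IsUnionOfQOrbits (q : ℕ) {s : ℕ} {r : Fin s → ℕ} (D : Set (∀ i, ZMod (r i))) : Prop :=
  ∀ a ∈ D, qOrbit q a ⊆ D

/-- The hypermatrix afforded by `D` (entry `0` on `D`, entry `1` outside `D`). -/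
def afforded {L : Type} [Zero L] [One L] {s : ℕ} {r : Fin s → ℕ}
    (D : Set (∀ i, ZMod (r i))) : (∀ i, ZMod (r i)) → L :=
  fun p => if p ∈ D then 0 else 1

/-- The minimum `B`-apparent distance `B-mad(M)` of a hypermatrix. -/
def Bmad {F : Type} [Field F] [Fintype F] {L : Type} [Zero L] {s : ℕ} {r : Fin s → ℕ}
    (B : Set (DSBound F)) (q : ℕ) (M : (∀ i, ZMod (r i)) → L) : ℕ :=
  sInf {m | ∃ P : (∀ i, ZMod (r i)) → L, P ≠ 0 ∧ IsUnionOfQOrbits q {p | P p ≠ 0} ∧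
    {p | P p ≠ 0} ⊆ {p | M p ≠ 0} ∧ m = DeltaH B s r P}

end DS
/-! ### Two-variable setting -/

namespace DS2
open DS

variable {r₁ r₂ : ℕ}

/-- Row `H_M(1,k)` of a matrix, i.e. the coefficient vector of `g_{1,k}`. -/
def row {L : Type} (M : ZMod r₁ × ZMod r₂ → L) (k : ZMod r₁) : ZMod r₂ → L :=
  fun j => M (k, j)

/-- Column `H_M(2,k)` of a matrix, i.e. the coefficient vector of `g_{2,k}`. -/
def col {L : Type} (M : ZMod r₁ × ZMod r₂ → L) (k : ZMod r₂) : ZMod r₁ → L :=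
  fun i => M (i, k)

/-- Row support `supp_1(M)`. -/
def supp1 {L : Type} [Zero L] (M : ZMod r₁ × ZMod r₂ → L) : Set (ZMod r₁) :=
  {k | row M k ≠ 0}

/-- Column support `supp_2(M)`. -/
def supp2 {L : Type} [Zero L] (M : ZMod r₁ × ZMod r₂ → L) : Set (ZMod r₂) :=
  {k | col M k ≠ 0}

variable {F : Type} [Field F] [Fintype F]

def omega1 {L : Type} [Zero L] (B : Set (DSBound F)) (M : ZMod r₁ × ZMod r₂ → L) : ℕ :=
  sSup ((fun δ => optB δ r₁ (supp1 M)ᶜ) '' B)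

def omega2 {L : Type} [Zero L] (B : Set (DSBound F)) (M : ZMod r₁ × ZMod r₂ → L) : ℕ :=
  sSup ((fun δ => optB δ r₂ (supp2 M)ᶜ) '' B)

def eps1 {L : Type} [Zero L] (B : Set (DSBound F)) (M : ZMod r₁ × ZMod r₂ → L) : ℕ :=
  sSup ((fun k => DeltaV B (row M k)) '' supp1 M)

def eps2 {L : Type} [Zero L] (B : Set (DSBound F)) (M : ZMod r₁ × ZMod r₂ → L) : ℕ :=
  sSup ((fun k => DeltaV B (col M k)) '' supp2 M)

/-- `B`-apparent distance of a two-variable matrix. -/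
def Delta2 {L : Type} [Zero L] (B : Set (DSBound F)) (M : ZMod r₁ × ZMod r₂ → L) : ℕ :=
  if M = 0 then 0 else max (omega1 B M * eps1 B M) (omega2 B M * eps2 B M)

/-! ### the BCH ds-bound, concretely -/

/-- `N` contains `a-1` consecutive integers modulo `n`. -/
def HasConsecutive {n : ℕ} (N : Set (ZMod n)) (a : ℕ) : Prop :=
  ∃ i0 : ZMod n, ∀ t : ℕ, t < a - 1 → i0 + (t : ZMod n) ∈ N

/-- The BCH ds-bound relation `(N,a) ∈ (δ_BCH)_n`. -/
def bchRel {n : ℕ} (N : Set (ZMod n)) (a : ℕ) : Prop :=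
  a = 1 ∨ (2 ≤ a ∧ HasConsecutive N a)

/-- The optimal BCH ds-bound `δ̄_BCH`. -/
def bchOpt (n : ℕ) (N : Set (ZMod n)) : ℕ := sSup {a | bchRel N a}

/-- BCH apparent distance of a vector. -/
def bchV {L : Type} [Zero L] {n : ℕ} (v : ZMod n → L) : ℕ :=
  if v = 0 then 0 else bchOpt n {i | v i ≠ 0}ᶜ

def bchOmega1 {L : Type} [Zero L] (M : ZMod r₁ × ZMod r₂ → L) : ℕ :=
  bchOpt r₁ (supp1 M)ᶜ

def bchOmega2 {L : Type} [Zero L] (M : ZMod r₁ × ZMod r₂ → L) : ℕ :=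
  bchOpt r₂ (supp2 M)ᶜ

def bchEps1 {L : Type} [Zero L] (M : ZMod r₁ × ZMod r₂ → L) : ℕ :=
  sSup ((fun k => bchV (row M k)) '' supp1 M)

def bchEps2 {L : Type} [Zero L] (M : ZMod r₁ × ZMod r₂ → L) : ℕ :=
  sSup ((fun k => bchV (col M k)) '' supp2 M)

/-- `Δ_1(M)` for the BCH bound. -/
def bchD1 {L : Type} [Zero L] (M : ZMod r₁ × ZMod r₂ → L) : ℕ := bchOmega1 M * bchEps1 M

/-- `Δ_2(M)` for the BCH bound. -/
def bchD2 {L : Type} [Zero L] (M : ZMod r₁ × ZMod r₂ → L) : ℕ := bchOmega2 M * bchEps2 M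

/-- BCH apparent distance of a two-variable matrix. -/
def bchDelta {L : Type} [Zero L] (M : ZMod r₁ × ZMod r₂ → L) : ℕ :=
  if M = 0 then 0 else max (bchD1 M) (bchD2 M)

/-! ### bivariate polynomials, DFT, codes -/

/-- Evaluation of a bivariate polynomial at `(u,v)`. -/
def eval2 {L : Type} [CommRing L] [NeZero r₁] [NeZero r₂] (g : ZMod r₁ × ZMod r₂ → L)
    (u v : L) : L :=
  ∑ p : ZMod r₁ × ZMod r₂, g p * u ^ p.1.val * v ^ p.2.val

/-- Bivariate DFT of an `F`-codeword. -/
def dft2 {F L : Type} [Field F] [CommRing L] [Algebra F L] [NeZero r₁] [NeZero r₂]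
    (α₁ α₂ : L) (c : ZMod r₁ × ZMod r₂ → F) : ZMod r₁ × ZMod r₂ → L :=
  fun j => ∑ p : ZMod r₁ × ZMod r₂,
    algebraMap F L (c p) * (α₁ ^ j.1.val) ^ p.1.val * (α₂ ^ j.2.val) ^ p.2.val

/-- Bivariate inverse DFT. -/
def invDFT2 {L : Type} [Field L] [NeZero r₁] [NeZero r₂] (α₁ α₂ : L)
    (g : ZMod r₁ × ZMod r₂ → L) : ZMod r₁ × ZMod r₂ → L :=
  fun j => ((r₁ : L) * (r₂ : L))⁻¹ * eval2 g (α₁⁻¹ ^ j.1.val) (α₂⁻¹ ^ j.2.val)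

/-- `Z̄(g)` for a bivariate polynomial. -/
def nonzeros2 {L : Type} [CommRing L] [NeZero r₁] [NeZero r₂]
    (g : ZMod r₁ × ZMod r₂ → L) : Set (L × L) :=
  {p | p.1 ^ r₁ = 1 ∧ p.2 ^ r₂ = 1 ∧ eval2 g p.1 p.2 ≠ 0}

/-- Multiplication (convolution) in `L(r₁,r₂)`. -/
def conv2 {L : Type} [CommRing L] [NeZero r₁] [NeZero r₂]
    (u w : ZMod r₁ × ZMod r₂ → L) : ZMod r₁ × ZMod r₂ → L :=
  fun p => ∑ t : ZMod r₁ × ZMod r₂, u t * w (p.1 - t.1, p.2 - t.2)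

/-- The coefficient matrix of the product `a(X₁)·b(X₂)`. -/
def prodPoly {L : Type} [Mul L] (a : ZMod r₁ → L) (b : ZMod r₂ → L) :
    ZMod r₁ × ZMod r₂ → L :=
  fun p => a p.1 * b p.2

/-- `g(X₁,v)`: the coefficient vector in `X₁` of `g` with `X₂` evaluated at `v`. -/
def secEval {L : Type} [CommRing L] [NeZero r₂] (g : ZMod r₁ × ZMod r₂ → L) (v : L) :
    ZMod r₁ → L :=
  fun i => evalV (row g i) v

/-- `g(u,X₂)`: the coefficient vector in `X₂` of `g` with `X₁` evaluated at `u`. -/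
def fstEval {L : Type} [CommRing L] [NeZero r₁] (g : ZMod r₁ × ZMod r₂ → L) (u : L) :
    ZMod r₂ → L :=
  fun j => evalV (col g j) u

/-- Defining set of a bivariate abelian code. -/
def defSet2 {F L : Type} [Field F] [CommRing L] [Algebra F L] [NeZero r₁] [NeZero r₂]
    (α₁ α₂ : L) (C : Set (ZMod r₁ × ZMod r₂ → F)) : Set (ZMod r₁ × ZMod r₂) :=
  {j | ∀ c ∈ C, dft2 α₁ α₂ c j = 0}

/-- Multiplication by `X₁`. -/
def shiftX {R : Type} (v : ZMod r₁ × ZMod r₂ → R) : ZMod r₁ × ZMod r₂ → R :=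
  fun p => v (p.1 - 1, p.2)

/-- Multiplication by `X₂`. -/
def shiftY {R : Type} (v : ZMod r₁ × ZMod r₂ → R) : ZMod r₁ × ZMod r₂ → R :=
  fun p => v (p.1, p.2 - 1)

/-- A bivariate abelian code: an ideal of `F[X₁,X₂]/(X₁^{r₁}-1, X₂^{r₂}-1)`. -/
def IsAbelianCode2 {F : Type} [Field F] (C : Set (ZMod r₁ × ZMod r₂ → F)) : Prop :=
  (0 : ZMod r₁ × ZMod r₂ → F) ∈ C ∧ (∀ u ∈ C, ∀ v ∈ C, u + v ∈ C) ∧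
    (∀ (a : F), ∀ v ∈ C, a • v ∈ C) ∧ (∀ v ∈ C, shiftX v ∈ C) ∧ (∀ v ∈ C, shiftY v ∈ C)

/-- The abelian code (ideal) generated by `c₀`. -/
def codeGen2 {F : Type} [Field F] (c₀ : ZMod r₁ × ZMod r₂ → F) :
    Set (ZMod r₁ × ZMod r₂ → F) :=
  ⋂₀ {S | IsAbelianCode2 S ∧ c₀ ∈ S}

/-- `(B,ᾱ)`-apparent distance of a bivariate abelian code. -/
def DeltaCodeAt2 {L : Type} [Field L] [Algebra F L] [NeZero r₁] [NeZero r₂]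
    (B : Set (DSBound F)) (α₁ α₂ : L) (C : Set (ZMod r₁ × ZMod r₂ → F)) : ℕ :=
  sInf {m | ∃ c ∈ C, c ≠ 0 ∧ m = Delta2 B (dft2 α₁ α₂ c)}

/-- `B`-apparent distance of a bivariate abelian code. -/
def DeltaCode2 (L : Type) [Field L] [Algebra F L] [NeZero r₁] [NeZero r₂]
    (B : Set (DSBound F)) (C : Set (ZMod r₁ × ZMod r₂ → F)) : ℕ :=
  sSup {m | ∃ α₁ α₂ : L, IsPrimitiveRoot α₁ r₁ ∧ IsPrimitiveRoot α₂ r₂ ∧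
    m = DeltaCodeAt2 B α₁ α₂ C}

/-- BCH `ᾱ`-apparent distance of a bivariate abelian code. -/
def bchDeltaCodeAt2 {L : Type} [Field L] [Algebra F L] [NeZero r₁] [NeZero r₂]
    (α₁ α₂ : L) (C : Set (ZMod r₁ × ZMod r₂ → F)) : ℕ :=
  sInf {m | ∃ c ∈ C, c ≠ 0 ∧ m = bchDelta (dft2 α₁ α₂ c)}

/-- BCH apparent distance of a bivariate abelian code. -/
def bchDeltaCode2 (L : Type) [Field L] [Algebra F L] [NeZero r₁] [NeZero r₂]
    (C : Set (ZMod r₁ × ZMod r₂ → F)) : ℕ :=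
  sSup {m | ∃ α₁ α₂ : L, IsPrimitiveRoot α₁ r₁ ∧ IsPrimitiveRoot α₂ r₂ ∧
    m = bchDeltaCodeAt2 α₁ α₂ C}

/-! ### q-orbits in two variables -/

def qOrbit2 (q : ℕ) (a : ZMod r₁ × ZMod r₂) : Set (ZMod r₁ × ZMod r₂) :=
  {x | ∃ t : ℕ, x = ((q : ZMod r₁) ^ t * a.1, (q : ZMod r₂) ^ t * a.2)}

def IsUnionOfQOrbits2 (q : ℕ) (D : Set (ZMod r₁ × ZMod r₂)) : Prop :=
  ∀ a ∈ D, qOrbit2 q a ⊆ D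

/-- The matrix afforded by `D`. -/
def afforded2 {L : Type} [Zero L] [One L] (D : Set (ZMod r₁ × ZMod r₂)) :
    ZMod r₁ × ZMod r₂ → L :=
  fun p => if p ∈ D then 0 else 1

/-- Minimum `B`-apparent distance `B-mad(M)` of a matrix. -/
def Bmad2 {L : Type} [Zero L] (B : Set (DSBound F)) (q : ℕ)
    (M : ZMod r₁ × ZMod r₂ → L) : ℕ :=
  sInf {m | ∃ P : ZMod r₁ × ZMod r₂ → L, P ≠ 0 ∧ IsUnionOfQOrbits2 q {p | P p ≠ 0} ∧
    {p | P p ≠ 0} ⊆ {p | M p ≠ 0} ∧ m = Delta2 B P}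

/-- Minimum BCH apparent distance of a matrix. -/
def bchBmad2 {L : Type} [Zero L] (q : ℕ) (M : ZMod r₁ × ZMod r₂ → L) : ℕ :=
  sInf {m | ∃ P : ZMod r₁ × ZMod r₂ → L, P ≠ 0 ∧ IsUnionOfQOrbits2 q {p | P p ≠ 0} ∧
    {p | P p ≠ 0} ⊆ {p | M p ≠ 0} ∧ m = bchDelta P}

/-! ### BCH codes -/

/-- The `q`-cyclotomic coset of `b` modulo `n`. -/
def cycCoset (q : ℕ) {n : ℕ} (b : ZMod n) : Set (ZMod n) :=
  {x | ∃ t : ℕ, x = (q : ZMod n) ^ t * b}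

/-- The defining set `∪_{l=0}^{δ-2} C_q(b+l)` of the BCH code `B_q(α,δ,b)`. -/
def bchDefSet (q : ℕ) {n : ℕ} (δ : ℕ) (b : ZMod n) : Set (ZMod n) :=
  ⋃ l ∈ Finset.range (δ - 1), cycCoset q (b + (l : ZMod n))

/-- `C` is a BCH cyclic code (in the classical sense) with respect to `α`. -/
def IsBCHCyclicCode {F L : Type} [Field F] [Fintype F] [CommRing L] [Algebra F L]
    {n : ℕ} [NeZero n] (α : L) (C : Set (ZMod n → F)) : Prop :=
  ∃ (δ : ℕ) (b : ZMod n), 2 ≤ δ ∧ δ ≤ n ∧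
    DS.defSet1 α C = bchDefSet (Fintype.card F) δ b

/-- The defining set of a bivariate BCH code with parameters `γ, δ₁, δ₂, b₁, b₂`. -/
def bivarBCHDefSet (q : ℕ) (γ : Set (Fin 2)) (δ₁ δ₂ : ℕ) (b₁ : ZMod r₁) (b₂ : ZMod r₂) :
    Set (ZMod r₁ × ZMod r₂) :=
  {p | 0 ∈ γ ∧ ∃ l ∈ Finset.range (δ₁ - 1), ∃ a : ZMod r₁ × ZMod r₂,
      a.1 = b₁ + (l : ZMod r₁) ∧ p ∈ qOrbit2 q a} ∪
  {p | 1 ∈ γ ∧ ∃ l ∈ Finset.range (δ₂ - 1), ∃ a : ZMod r₁ × ZMod r₂,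
      a.2 = b₂ + (l : ZMod r₂) ∧ p ∈ qOrbit2 q a}

/-- `C` is a bivariate BCH code with respect to `(α₁,α₂)`. -/
def IsBivarBCH {F L : Type} [Field F] [Fintype F] [CommRing L] [Algebra F L]
    [NeZero r₁] [NeZero r₂] (α₁ α₂ : L) (C : Set (ZMod r₁ × ZMod r₂ → F)) : Prop :=
  ∃ (γ : Set (Fin 2)) (δ₁ δ₂ : ℕ) (b₁ : ZMod r₁) (b₂ : ZMod r₂),
    (0 ∈ γ → 2 ≤ δ₁ ∧ δ₁ ≤ r₁) ∧ (1 ∈ γ → 2 ≤ δ₂ ∧ δ₂ ≤ r₂) ∧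
    defSet2 α₁ α₂ C = bivarBCHDefSet (Fintype.card F) γ δ₁ δ₂ b₁ b₂

/-- Permutation equivalence of codes (permutation of the coordinate positions). -/
def PermEquiv {F : Type} [Field F] (C C' : Set (ZMod r₁ × ZMod r₂ → F)) : Prop :=
  ∃ σ : Equiv.Perm (ZMod r₁ × ZMod r₂), C' = (fun c => c ∘ σ) '' C

end DS2

end

open DS DS2

/-! ### The BCH bound -/

lemma bchRel_le {n : ℕ} [NeZero n] {N : Set (ZMod n)} (hN : N ≠ Set.univ) {a : ℕ}
    (h : bchRel N a) : a ≤ n := by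
  have hn : 0 < n := Nat.pos_of_ne_zero (NeZero.ne n)
  rcases h with rfl | ⟨h2, i0, hi⟩
  · omega
  · by_contra hlt
    apply hN
    ext x
    simp only [Set.mem_univ, iff_true]
    have h1 := hi (x - i0).val (by have := ZMod.val_lt (x - i0); omega)
    simpa using h1

/-- For `N ≠ univ` the supremum defining `bchOpt n N` is over a bounded set, hence attained. -/
lemma bchRel_bchOpt {n : ℕ} [NeZero n] {N : Set (ZMod n)} (hN : N ≠ Set.univ) :
    bchRel N (bchOpt n N) :=
  Nat.sSup_mem (s := {a | bchRel N a}) ⟨1, Or.inl rfl⟩ ⟨n, fun _ ha => bchRel_le hN ha⟩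

lemma le_bchOpt {n : ℕ} [NeZero n] {N : Set (ZMod n)} (hN : N ≠ Set.univ) {a : ℕ}
    (h : bchRel N a) : a ≤ bchOpt n N :=
  le_csSup (s := {a | bchRel N a}) ⟨n, fun _ ha => bchRel_le hN ha⟩ h

lemma one_le_bchOpt {n : ℕ} [NeZero n] {N : Set (ZMod n)} (hN : N ≠ Set.univ) :
    1 ≤ bchOpt n N := le_bchOpt hN (Or.inl rfl)

lemma bchOpt_mono {n : ℕ} [NeZero n] {N N' : Set (ZMod n)} (h : N ⊆ N')
    (hN' : N' ≠ Set.univ) : bchOpt n N ≤ bchOpt n N' := by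
  have hN : N ≠ Set.univ := fun e => hN' (Set.univ_subset_iff.1 (e ▸ h))
  apply le_bchOpt hN'
  rcases bchRel_bchOpt hN with h1 | ⟨h2, i0, hi⟩
  · exact Or.inl h1
  · exact Or.inr ⟨h2, i0, fun t ht => h (hi t ht)⟩

lemma zeros_ne_univ {L : Type} [Zero L] {n : ℕ} {w : ZMod n → L} (hw : w ≠ 0) :
    ({i | w i ≠ 0}ᶜ : Set (ZMod n)) ≠ Set.univ := by
  intro h
  apply hw
  funext i
  have : i ∈ ({i | w i ≠ 0}ᶜ : Set (ZMod n)) := h ▸ Set.mem_univ i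
  simpa using this

lemma nonzeros1_finite {L : Type} [Field L] {n : ℕ} [NeZero n] (w : ZMod n → L) :
    (nonzeros1 w).Finite := by
  refine (Polynomial.nthRootsFinset n (1 : L)).finite_toSet.subset fun β hβ => ?_
  rw [Finset.mem_coe, Polynomial.mem_nthRootsFinset (Nat.pos_of_ne_zero (NeZero.ne n))]
  exact hβ.1

lemma pow_val_add {L : Type} [Field L] {n : ℕ} [NeZero n] {β : L} (hβ : β ^ n = 1)
    (x y : ZMod n) : β ^ (x + y).val = β ^ x.val * β ^ y.val := by
  rw [ZMod.val_add, ← pow_add, ← pow_eq_pow_mod _ hβ]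

/-- The BCH bound, for a given run of `a - 1` consecutive zero coefficients. -/
lemma le_ncard_of_hasConsecutive {L : Type} [Field L] {n : ℕ} [NeZero n]
    (hroot : ∃ α : L, IsPrimitiveRoot α n) {w : ZMod n → L} (hw : w ≠ 0) {a : ℕ}
    (ha : 1 ≤ a) (han : a ≤ n) (hc : HasConsecutive {i | w i ≠ 0}ᶜ a) :
    a ≤ (nonzeros1 w).ncard := by
  have hn : 0 < n := Nat.pos_of_ne_zero (NeZero.ne n)
  obtain ⟨α, hα⟩ := hroot
  obtain ⟨i0, hi⟩ := hc
  -- Rotating by `c` moves the run of zeros to the top exponents `n - a + 1, …, n - 1`.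
  set c : ZMod n := i0 + ((a - 1 : ℕ) : ZMod n) with hcdef
  set P : L[X] := ∑ j : ZMod n, C (w (j + c)) * X ^ j.val with hP
  have hcoeff : ∀ j : ZMod n, P.coeff j.val = w (j + c) := by
    intro j
    simp only [hP, finsetSum_coeff, coeff_C_mul, coeff_X_pow]
    rw [Finset.sum_eq_single j]
    · simp
    · intro b _ hb
      rw [if_neg (fun e => hb (ZMod.val_injective n e.symm)), mul_zero]
    · simp
  have hP0 : P ≠ 0 := by
    intro h0
    apply hw
    funext i
    have := hcoeff (i - c)
    simpa [h0] using this.symm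
  have hdeg : P.natDegree ≤ n - a := by
    apply natDegree_sum_le_of_forall_le
    intro j _
    by_cases hj : j.val ≤ n - a
    · exact (natDegree_C_mul_X_pow_le _ _).trans hj
    · have hlt := ZMod.val_lt j
      have hmem := hi (j.val + a - 1 - n) (by omega)
      have hidx : i0 + ((j.val + a - 1 - n : ℕ) : ZMod n) = j + c := by
        have h1 : ((j.val + a - 1 - n : ℕ) : ZMod n) = ((j.val + (a - 1) : ℕ) : ZMod n) := by
          have h2 : j.val + (a - 1) = (j.val + a - 1 - n) + n := by omega
          rw [h2]
          simp
        rw [h1, hcdef]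
        push_cast
        rw [ZMod.natCast_zmod_val]
        ring
      rw [hidx] at hmem
      have hz : w (j + c) = 0 := by simpa using hmem
      simp [hz]
  have heval : ∀ β : L, β ^ n = 1 → evalV w β = P.eval β * β ^ c.val := by
    intro β hβ
    rw [evalV, hP, eval_finsetSum, Finset.sum_mul, ← Equiv.sum_comp (Equiv.addRight c)]
    refine Finset.sum_congr rfl fun j _ => ?_
    simp only [Equiv.coe_addRight, pow_val_add hβ, eval_mul, eval_C, eval_pow, eval_X]
    ring
  have hsub : nthRootsFinset n (1 : L) ⊆ (nonzeros1_finite w).toFinset ∪ P.roots.toFinset := by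
    intro β hβ
    rw [mem_nthRootsFinset hn] at hβ
    rw [Finset.mem_union, Set.Finite.mem_toFinset, Multiset.mem_toFinset, mem_roots hP0]
    by_cases h : P.eval β = 0
    · exact Or.inr h
    · refine Or.inl ⟨hβ, ?_⟩
      rw [heval β hβ]
      refine mul_ne_zero h (pow_ne_zero _ ?_)
      rintro rfl
      rw [zero_pow hn.ne'] at hβ
      exact zero_ne_one hβ
  have h1 := (Finset.card_le_card hsub).trans (Finset.card_union_le _ _)
  rw [hα.card_nthRootsFinset, ← Set.ncard_eq_toFinset_card _ (nonzeros1_finite w)] at h1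
  have h2 := (Multiset.toFinset_card_le P.roots).trans (card_roots' P)
  omega

lemma bchV_le_ncard {L : Type} [Field L] {n : ℕ} [NeZero n]
    (hroot : ∃ α : L, IsPrimitiveRoot α n) (w : ZMod n → L) :
    bchV w ≤ (nonzeros1 w).ncard := by
  by_cases hw : w = 0
  · simp [bchV, hw]
  · rw [bchV, if_neg hw]
    have hN := zeros_ne_univ hw
    have hrel := bchRel_bchOpt hN
    refine le_ncard_of_hasConsecutive hroot hw (one_le_bchOpt hN) (bchRel_le hN hrel) ?_
    rcases hrel with h1 | ⟨_, h2⟩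
    · rw [h1]
      exact ⟨0, fun t ht => absurd ht (by omega)⟩
    · exact h2

lemma one_le_bchV {L : Type} [Zero L] {n : ℕ} [NeZero n] {w : ZMod n → L} (hw : w ≠ 0) :
    1 ≤ bchV w := by
  rw [bchV, if_neg hw]
  exact one_le_bchOpt (zeros_ne_univ hw)

/-! ### Slicing a bivariate polynomial by its second variable -/

lemma eval2_eq_evalV {L : Type} [Field L] {r₁ r₂ : ℕ} [NeZero r₁] [NeZero r₂]
    (g : ZMod r₁ × ZMod r₂ → L) (u v : L) : eval2 g u v = evalV (secEval g v) u := by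
  simp only [eval2, evalV, secEval, row, Fintype.sum_prod_type, Finset.sum_mul]
  refine Finset.sum_congr rfl fun i _ => Finset.sum_congr rfl fun j _ => ?_
  ring

lemma nonzeros2_finite {L : Type} [Field L] {r₁ r₂ : ℕ} [NeZero r₁] [NeZero r₂]
    (g : ZMod r₁ × ZMod r₂ → L) : (nonzeros2 g).Finite := by
  refine ((nthRootsFinset r₁ (1 : L)) ×ˢ (nthRootsFinset r₂ (1 : L))).finite_toSet.subset
    fun p hp => ?_
  rw [Finset.mem_coe, Finset.mem_product,
    mem_nthRootsFinset (Nat.pos_of_ne_zero (NeZero.ne r₁)),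
    mem_nthRootsFinset (Nat.pos_of_ne_zero (NeZero.ne r₂))]
  exact ⟨hp.1, hp.2.1⟩

lemma ncard_nonzeros2 {L : Type} [Field L] {r₁ r₂ : ℕ} [NeZero r₁] [NeZero r₂]
    (g : ZMod r₁ × ZMod r₂ → L) :
    (nonzeros2 g).ncard = ∑ v ∈ (nonzeros2_finite g).toFinset.image Prod.snd,
      (nonzeros1 (secEval g v)).ncard := by
  rw [Set.ncard_eq_toFinset_card _ (nonzeros2_finite g),
    Finset.card_eq_sum_card_image Prod.snd]
  refine Finset.sum_congr rfl fun v hv => ?_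
  obtain ⟨p, hp, rfl⟩ := Finset.mem_image.1 hv
  rw [Set.Finite.mem_toFinset] at hp
  rw [Set.ncard_eq_toFinset_card _ (nonzeros1_finite _)]
  refine Finset.card_bij' (fun q _ => q.1) (fun u _ => (u, p.2)) ?_ ?_ ?_ ?_
  · rintro ⟨u, v⟩ hq
    simp only [Finset.mem_filter, Set.Finite.mem_toFinset] at hq ⊢
    obtain ⟨⟨h1, _, h3⟩, rfl⟩ := hq
    exact ⟨h1, by rwa [← eval2_eq_evalV]⟩
  · intro u hu
    simp only [Finset.mem_filter, Set.Finite.mem_toFinset] at hu ⊢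
    exact ⟨⟨hu.1, hp.2.1, by rw [eval2_eq_evalV]; exact hu.2⟩, trivial⟩
  · rintro ⟨u, v⟩ hq
    simp only [Finset.mem_filter] at hq
    rw [← hq.2]
  · intro u hu
    rfl

lemma secEval_ne_zero {L : Type} [Field L] {r₁ r₂ : ℕ} [NeZero r₁] [NeZero r₂]
    {g : ZMod r₁ × ZMod r₂ → L} {k : ZMod r₁} {v : L} (hv : v ∈ nonzeros1 (row g k)) :
    secEval g v ≠ 0 := fun h => hv.2 (congrFun h k)

/-- A nonzero section `g(X₁,v)` is supported in `supp₁`, so it has at least the zero runs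
counted by `ω₁`. -/
lemma bchOmega1_le {L : Type} [Field L] {r₁ r₂ : ℕ} [NeZero r₁] [NeZero r₂]
    {g : ZMod r₁ × ZMod r₂ → L} {v : L} (h : secEval g v ≠ 0) :
    bchOmega1 g ≤ bchV (secEval g v) := by
  rw [bchV, if_neg h, bchOmega1]
  refine bchOpt_mono (Set.compl_subset_compl.2 fun i hi hrow => hi ?_) (zeros_ne_univ h)
  simp [secEval, hrow, evalV]

/-- The equality case of `ω₁ ε₁ ≤ ω₁ |Z̄(g_{1,k})| ≤ ∑ v ∈ Z̄(g_{1,k}), |Z̄(g(X₁,v))| ≤ |Z̄(g)|`. -/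
lemma involved_rows {L : Type} [Field L] {r₁ r₂ : ℕ} [NeZero r₁] [NeZero r₂]
    (hroot₁ : ∃ α : L, IsPrimitiveRoot α r₁) (hroot₂ : ∃ α : L, IsPrimitiveRoot α r₂)
    (g : ZMod r₁ × ZMod r₂ → L) (hD : bchD1 g = (nonzeros2 g).ncard)
    (k : ZMod r₁) (hk : bchV (row g k) = bchEps1 g) :
    bchV (row g k) = (nonzeros1 (row g k)).ncard ∧
      (nonzeros1 (row g k)).ncard = (Prod.snd '' nonzeros2 g).ncard ∧
      ∀ v ∈ nonzeros1 (row g k),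
        bchV (secEval g v) = (nonzeros1 (secEval g v)).ncard := by
  by_cases hg : g = 0
  · subst hg
    have h1 : row (0 : ZMod r₁ × ZMod r₂ → L) k = 0 := rfl
    have h2 : nonzeros1 (0 : ZMod r₂ → L) = ∅ := by ext; simp [nonzeros1, evalV]
    have h3 : nonzeros2 (0 : ZMod r₁ × ZMod r₂ → L) = ∅ := by ext; simp [nonzeros2, eval2]
    rw [h1, h2, h3]
    simp [bchV]
  -- `g ≠ 0` forces `ω₁ ≥ 1`.
  have hω : 1 ≤ bchOmega1 g := by
    apply one_le_bchOpt
    intro h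
    apply hg
    funext p
    have : p.1 ∈ (supp1 g)ᶜ := h ▸ Set.mem_univ p.1
    have hrow : row g p.1 = 0 := by simpa [supp1] using this
    exact congrFun hrow p.2
  set T := (nonzeros2_finite g).toFinset.image Prod.snd with hT
  set A := (nonzeros1_finite (row g k)).toFinset with hA
  have hAcard : (nonzeros1 (row g k)).ncard = A.card :=
    Set.ncard_eq_toFinset_card _ (nonzeros1_finite _)
  have hTcard : (Prod.snd '' nonzeros2 g).ncard = T.card := by
    rw [← Set.ncard_coe_finset, hT, Finset.coe_image, Set.Finite.coe_toFinset]
  have hlow : ∀ v ∈ A, bchOmega1 g ≤ (nonzeros1 (secEval g v)).ncard := by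
    intro v hv
    have hv' : v ∈ nonzeros1 (row g k) := by simpa [hA] using hv
    exact (bchOmega1_le (secEval_ne_zero hv')).trans (bchV_le_ncard hroot₁ _)
  have hAT : A ⊆ T := by
    intro v hv
    have hv' : v ∈ nonzeros1 (row g k) := by simpa [hA] using hv
    obtain ⟨u, hu⟩ := (Set.ncard_pos (nonzeros1_finite (secEval g v))).1
      (hω.trans (hlow v hv))
    refine Finset.mem_image.2 ⟨(u, v), ?_, rfl⟩
    rw [Set.Finite.mem_toFinset]
    exact ⟨hu.1, hv'.1, by rw [eval2_eq_evalV]; exact hu.2⟩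
  have hTpos : ∀ v ∈ T, 1 ≤ (nonzeros1 (secEval g v)).ncard := by
    intro v hv
    obtain ⟨p, hp, rfl⟩ := Finset.mem_image.1 hv
    rw [Set.Finite.mem_toFinset] at hp
    refine (Set.ncard_pos (nonzeros1_finite _)).2 ⟨p.1, hp.1, ?_⟩
    rw [← eval2_eq_evalV]
    exact hp.2.2
  have hsum : ∑ v ∈ T \ A, (nonzeros1 (secEval g v)).ncard +
      ∑ v ∈ A, (nonzeros1 (secEval g v)).ncard = bchOmega1 g * bchEps1 g := by
    rw [Finset.sum_sdiff hAT, hT, ← ncard_nonzeros2, ← hD, bchD1]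
  have hε : bchEps1 g ≤ A.card := by
    rw [← hk, ← hAcard]
    exact bchV_le_ncard hroot₂ _
  have hωε : bchOmega1 g * bchEps1 g ≤ bchOmega1 g * A.card := Nat.mul_le_mul_left _ hε
  have hωA : bchOmega1 g * A.card ≤ ∑ v ∈ A, (nonzeros1 (secEval g v)).ncard := by
    have := Finset.sum_le_sum hlow
    rw [Finset.sum_const, smul_eq_mul] at this
    linarith
  have hcardTA : (T \ A).card ≤ ∑ v ∈ T \ A, (nonzeros1 (secEval g v)).ncard := by
    rw [Finset.card_eq_sum_ones]
    exact Finset.sum_le_sum fun v hv => hTpos v (Finset.mem_sdiff.1 hv).1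
  have hTA : T = A := by
    refine Finset.Subset.antisymm ?_ hAT
    rw [← Finset.sdiff_eq_empty_iff_subset, ← Finset.card_eq_zero]
    omega
  have hεA : bchEps1 g = A.card := Nat.eq_of_mul_eq_mul_left hω (by omega)
  have hterm : ∀ v ∈ A, bchOmega1 g = (nonzeros1 (secEval g v)).ncard := by
    rw [← Finset.sum_eq_sum_iff_of_le hlow, Finset.sum_const, smul_eq_mul, mul_comm]
    omega
  refine ⟨by rw [hk, hAcard, hεA], by rw [hAcard, hTcard, hTA], fun v hv => ?_⟩
  refine le_antisymm (bchV_le_ncard hroot₁ _) ?_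
  rw [← hterm v (by simpa [hA] using hv)]
  exact bchOmega1_le (secEval_ne_zero hv)

lemma nonzeros2_swap {L : Type} [Field L] {r₁ r₂ : ℕ} [NeZero r₁] [NeZero r₂]
    (g : ZMod r₁ × ZMod r₂ → L) : nonzeros2 (g ∘ Prod.swap) = Prod.swap '' nonzeros2 g := by
  have h : ∀ u v, eval2 (g ∘ Prod.swap) v u = eval2 g u v := by
    intro u v
    rw [eval2, eval2, ← Equiv.sum_comp (Equiv.prodComm (ZMod r₁) (ZMod r₂))]
    refine Finset.sum_congr rfl fun p _ => ?_
    simp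
    ring
  rw [Set.image_swap_eq_preimage_swap]
  ext ⟨v, u⟩
  simp only [nonzeros2, Set.mem_ofPred_eq, Set.mem_preimage, Prod.swap, h]
  tauto

/-- Lemma on involved rows/columns of a bivariate polynomial `g`
satisfying `Δ₁(M) = Δ₂(M) = Δ(M) = |Z̄(g)|` (BCH apparent distance). -/
theorem stmt_12 {L : Type} [Field L] (r₁ r₂ : ℕ) [NeZero r₁] [NeZero r₂]
    (hr₁ : (r₁ : L) ≠ 0) (hr₂ : (r₂ : L) ≠ 0)
    (hroot₁ : ∃ α : L, IsPrimitiveRoot α r₁) (hroot₂ : ∃ α : L, IsPrimitiveRoot α r₂)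
    (g : ZMod r₁ × ZMod r₂ → L)
    (hcond₁ : bchD1 g = bchD2 g) (hcond₂ : bchD2 g = bchDelta g)
    (hcond₃ : bchDelta g = (nonzeros2 g).ncard) :
    (∀ k : ZMod r₁, bchV (row g k) = bchEps1 g → bchD1 g = bchDelta g →
      bchV (row g k) = (nonzeros1 (row g k)).ncard ∧
      (nonzeros1 (row g k)).ncard = (Prod.snd '' nonzeros2 g).ncard ∧
      ∀ v ∈ nonzeros1 (row g k),
        bchV (secEval g v) = (nonzeros1 (secEval g v)).ncard) ∧
    (∀ k : ZMod r₂, bchV (col g k) = bchEps2 g → bchD2 g = bchDelta g →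
      bchV (col g k) = (nonzeros1 (col g k)).ncard ∧
      (nonzeros1 (col g k)).ncard = (Prod.fst '' nonzeros2 g).ncard ∧
      ∀ u ∈ nonzeros1 (col g k),
        bchV (fstEval g u) = (nonzeros1 (fstEval g u)).ncard) := by
  have hswap := nonzeros2_swap g
  refine ⟨fun k hk hD => involved_rows hroot₁ hroot₂ g (hD.trans hcond₃) k hk,
    fun k hk hD => ?_⟩
  -- Columns of `g` are, definitionally, rows of `g ∘ Prod.swap`.
  have hcard : bchD1 (g ∘ Prod.swap) = (nonzeros2 (g ∘ Prod.swap)).ncard := by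
    rw [hswap, Set.ncard_image_of_injective _ Prod.swap_injective]
    exact hD.trans hcond₃
  have hmain := involved_rows hroot₂ hroot₁ (g ∘ Prod.swap) hcard k hk
  rw [hswap, Set.image_image] at hmain
  exact hmain
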